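/- Define Ω ∈ End(V_{t₁}⊗V_{t₂}) on homogeneous elements by Ω(x⊗y) = (1/2)·((H·x)⊗(D·y) + (D·x)⊗(H·y)) + (−1)^{deg x}·((F·x)⊗(E·y) − (E·x)⊗(F·y)) (the action of the invariant element ω = (1/2)(H⊗D + D⊗H) + F⊗E − E⊗F). Then, with a = λ₁μ₂ + λ₂μ₁ and b = λ₁ + λ₂: Ω = ((a+b)/2)·Y_{t₁,t₂}∘L_{t₁,t₂} + ((a−b)/2)·Y'_{t₁,t₂}∘L'_{t₁,t₂}. -/

import Mathlib

open TensorProduct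

noncomputable section

/-- a triple t = (λ, μ, σ) ∈ ℚ × ℚ × ℤ/2 -/
structure Triple where
  lam : ℚ
  mu : ℚ
  sg : ZMod 2

instance : Add Triple := ⟨fun a b => ⟨a.lam + b.lam, a.mu + b.mu, a.sg + b.sg⟩⟩
instance : Neg Triple := ⟨fun a => ⟨-a.lam, -a.mu, -a.sg⟩⟩
instance : Sub Triple := ⟨fun a b => a + -b⟩

def e₂ : Triple := ⟨0, 1, 0⟩
def e₃ : Triple := ⟨0, 0, 1⟩
/-- t* = (−λ, −μ, σ+1) -/
def Triple.star (t : Triple) : Triple := ⟨-t.lam, -t.mu, t.sg + 1⟩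

/-- the underlying space of every V_t: basis v = (1,0) (degree σ), w = (0,1) (degree σ+1) -/
abbrev V : Type := ℚ × ℚ
abbrev VV : Type := V ⊗[ℚ] V
abbrev VVV : Type := V ⊗[ℚ] VV

def vv : V := (1, 0)
def ww : V := (0, 1)

/-- (−1)^σ -/
def sgn (s : ZMod 2) : ℚ := if s = 0 then 1 else -1

/-- H: v ↦ (μ+1)v, w ↦ (μ−1)w -/
def opH (t : Triple) : V →ₗ[ℚ] V :=
  LinearMap.prodMap ((t.mu + 1) • LinearMap.id) ((t.mu - 1) • LinearMap.id)
/-- D: multiplication by λ -/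
def opD (t : Triple) : V →ₗ[ℚ] V := t.lam • LinearMap.id
/-- E: v ↦ 0, w ↦ λv -/
def opE (t : Triple) : V →ₗ[ℚ] V := (LinearMap.inl ℚ ℚ ℚ) ∘ₗ (t.lam • LinearMap.snd ℚ ℚ ℚ)
/-- F: v ↦ w, w ↦ 0 -/
def opF (t : Triple) : V →ₗ[ℚ] V := (LinearMap.inr ℚ ℚ ℚ) ∘ₗ (LinearMap.fst ℚ ℚ ℚ)
/-- the parity operator x ↦ (−1)^{deg x} x on V_t -/
def opJ (t : Triple) : V →ₗ[ℚ] V :=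
  LinearMap.prodMap (sgn t.sg • LinearMap.id) ((- sgn t.sg) • LinearMap.id)

/-- the four generators H, D, E, F of gl(1|1) -/
inductive Gen | H | D | E | F

/-- H and D have degree 0; E and F have degree 1 -/
def Gen.isEven : Gen → Bool
  | .H => true | .D => true | .E => false | .F => false

def op : Gen → Triple → V →ₗ[ℚ] V
  | .H, t => opH t
  | .D, t => opD t
  | .E, t => opE t
  | .F, t => opF t

/-- the super-Leibniz action X·(x⊗y) = (X·x)⊗y + (−1)^{deg X·deg x}·x⊗(X·y)
on V_{t₁}⊗V_{t₂} (the sign being implemented by the parity operator) -/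
def op2 (g : Gen) (t₁ t₂ : Triple) : VV →ₗ[ℚ] VV :=
  TensorProduct.map (op g t₁) LinearMap.id +
  TensorProduct.map (if g.isEven then LinearMap.id else opJ t₁) (op g t₂)

/-- the linear map ℚ×ℚ → M sending (1,0) ↦ p and (0,1) ↦ q -/
def bmap {M : Type*} [AddCommGroup M] [Module ℚ M] (p q : M) : V →ₗ[ℚ] M :=
  LinearMap.coprod (LinearMap.toSpanSingleton ℚ M p) (LinearMap.toSpanSingleton ℚ M q)

/-- Y_{t₁,t₂} : V_{t₁+t₂+e₂} → V_{t₁}⊗V_{t₂} -/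
def Ymap (t₁ t₂ : Triple) : V →ₗ[ℚ] VV :=
  bmap (vv ⊗ₜ[ℚ] vv) (ww ⊗ₜ[ℚ] vv + sgn t₁.sg • (vv ⊗ₜ[ℚ] ww))

/-- Y'_{t₁,t₂} : V_{t₁+t₂−e₂+e₃} → V_{t₁}⊗V_{t₂} -/
def Y'map (t₁ t₂ : Triple) : V →ₗ[ℚ] VV :=
  bmap ((t₁.lam + t₂.lam)⁻¹ •
      (t₁.lam • (vv ⊗ₜ[ℚ] ww) - (sgn t₁.sg * t₂.lam) • (ww ⊗ₜ[ℚ] vv)))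
    (ww ⊗ₜ[ℚ] ww)

/-- L_{t₁,t₂} : V_{t₁}⊗V_{t₂} → V_{t₁+t₂+e₂} -/
def Lmap (t₁ t₂ : Triple) : VV →ₗ[ℚ] V :=
  TensorProduct.lift (LinearMap.mk₂ ℚ
    (fun x y => ((x.1 * y.1 : ℚ),
      (t₁.lam / (t₁.lam + t₂.lam)) * (x.2 * y.1)
        + (sgn t₁.sg * t₂.lam / (t₁.lam + t₂.lam)) * (x.1 * y.2)))
    (by intro x x' y; apply Prod.ext <;> simp <;> ring)
    (by intro a x y; apply Prod.ext <;> simp [smul_eq_mul] <;> ring)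
    (by intro x y y'; apply Prod.ext <;> simp <;> ring)
    (by intro a x y; apply Prod.ext <;> simp [smul_eq_mul] <;> ring))

/-- L'_{t₁,t₂} : V_{t₁}⊗V_{t₂} → V_{t₁+t₂−e₂+e₃} -/
def L'map (t₁ t₂ : Triple) : VV →ₗ[ℚ] V :=
  TensorProduct.lift (LinearMap.mk₂ ℚ
    (fun x y => ((x.1 * y.2 - sgn t₁.sg * (x.2 * y.1) : ℚ), (x.2 * y.2 : ℚ)))
    (by intro x x' y; apply Prod.ext <;> simp <;> ring)
    (by intro a x y; apply Prod.ext <;> simp [smul_eq_mul] <;> ring)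
    (by intro x y y'; apply Prod.ext <;> simp <;> ring)
    (by intro a x y; apply Prod.ext <;> simp [smul_eq_mul] <;> ring))

/-- ∩_t : V_{t*}⊗V_t → ℚ -/
def capMap (t : Triple) : VV →ₗ[ℚ] ℚ :=
  TensorProduct.lift (LinearMap.mk₂ ℚ
    (fun x y => (x.1 * y.2 + sgn t.sg * (x.2 * y.1) : ℚ))
    (by intro x x' y; simp; ring)
    (by intro a x y; simp [smul_eq_mul]; ring)
    (by intro x y y'; simp; ring)
    (by intro a x y; simp [smul_eq_mul]; ring))

/-- ∪_t : ℚ → V_{t*}⊗V_t -/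
def cupMap (t : Triple) : ℚ →ₗ[ℚ] VV :=
  LinearMap.toSpanSingleton ℚ VV (ww ⊗ₜ[ℚ] vv - sgn t.sg • (vv ⊗ₜ[ℚ] ww))


/-- the action of ω = (1/2)(H⊗D + D⊗H) + F⊗E − E⊗F on V_{t₁}⊗V_{t₂}:
on homogeneous elements,
ω(x⊗y) = (1/2)((H·x)⊗(D·y) + (D·x)⊗(H·y)) + (−1)^{deg x}((F·x)⊗(E·y) − (E·x)⊗(F·y)),
the sign being implemented by the parity operator. -/
def omegaMap (t₁ t₂ : Triple) : VV →ₗ[ℚ] VV :=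
  (1/2 : ℚ) • (TensorProduct.map (opH t₁) (opD t₂) + TensorProduct.map (opD t₁) (opH t₂))
  + TensorProduct.map (opF t₁ ∘ₗ opJ t₁) (opE t₂)
  + (-1 : ℚ) • TensorProduct.map (opE t₁ ∘ₗ opJ t₁) (opF t₂)

/-!
The invariant element acts by a scalar on the image of each intertwiner: by `(a + b) / 2` on the
image of `Y` and by `(a - b) / 2` on that of `Y'`. Since `Y ∘ L + Y' ∘ L' = id`, composing with `Ω`
on the left yields the spectral decomposition of `Ω`.
-/

section SpectralDecomposition

variable {R M N N' : Type*} [CommSemiring R] [AddCommMonoid M] [AddCommMonoid N]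
  [AddCommMonoid N'] [Module R M] [Module R N] [Module R N']

theorem eq_smul_comp_add_smul_comp_of_comp_eq_smul {T : M →ₗ[R] M} {Y : N →ₗ[R] M}
    {Y' : N' →ₗ[R] M} {L : M →ₗ[R] N} {L' : M →ₗ[R] N'} {c c' : R}
    (hY : T ∘ₗ Y = c • Y) (hY' : T ∘ₗ Y' = c' • Y')
    (hid : Y ∘ₗ L + Y' ∘ₗ L' = LinearMap.id) :
    T = c • (Y ∘ₗ L) + c' • (Y' ∘ₗ L') :=
  calc
    T = T ∘ₗ (Y ∘ₗ L + Y' ∘ₗ L') := by rw [hid, LinearMap.comp_id]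
    _ = (T ∘ₗ Y) ∘ₗ L + (T ∘ₗ Y') ∘ₗ L' := by
      rw [LinearMap.comp_add, LinearMap.comp_assoc, LinearMap.comp_assoc]
    _ = c • (Y ∘ₗ L) + c' • (Y' ∘ₗ L') := by
      rw [hY, hY', LinearMap.smul_comp, LinearMap.smul_comp]

end SpectralDecomposition

theorem sgn_mul_self (s : ZMod 2) : sgn s * sgn s = 1 := by
  unfold sgn
  split_ifs <;> norm_num

section Basis

variable {M : Type*} [AddCommGroup M] [Module ℚ M]

theorem linearMap_ext_vv_ww {f g : V →ₗ[ℚ] M} (hv : f vv = g vv) (hw : f ww = g ww) : f = g :=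
  LinearMap.prod_ext (LinearMap.ext_ring hv) (LinearMap.ext_ring hw)

theorem linearMap_ext_tmul_vv_ww {f g : VV →ₗ[ℚ] M}
    (hvv : f (vv ⊗ₜ vv) = g (vv ⊗ₜ vv)) (hvw : f (vv ⊗ₜ ww) = g (vv ⊗ₜ ww))
    (hwv : f (ww ⊗ₜ vv) = g (ww ⊗ₜ vv)) (hww : f (ww ⊗ₜ ww) = g (ww ⊗ₜ ww)) : f = g :=
  TensorProduct.ext <|
    linearMap_ext_vv_ww (linearMap_ext_vv_ww hvv hvw) (linearMap_ext_vv_ww hwv hww)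

theorem bmap_vv (p q : M) : bmap p q vv = p := by simp [bmap, vv]

theorem bmap_ww (p q : M) : bmap p q ww = q := by simp [bmap, ww]

end Basis

section Generators

variable (t : Triple)

theorem opH_vv : opH t vv = (t.mu + 1) • vv := by simp [opH, vv]

theorem opH_ww : opH t ww = (t.mu - 1) • ww := by simp [opH, ww]

theorem opD_apply (x : V) : opD t x = t.lam • x := rfl

theorem opE_vv : opE t vv = 0 := by simp [opE, vv]

theorem opE_ww : opE t ww = t.lam • vv := by simp [opE, vv, ww]

theorem opF_vv : opF t vv = ww := by simp [opF, vv, ww]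

theorem opF_ww : opF t ww = 0 := by simp [opF, ww]

theorem opJ_vv : opJ t vv = sgn t.sg • vv := by simp [opJ, vv]

theorem opJ_ww : opJ t ww = -sgn t.sg • ww := by simp [opJ, ww]

end Generators

section TensorProductOfTwo

variable (t₁ t₂ : Triple)

theorem Ymap_vv : Ymap t₁ t₂ vv = vv ⊗ₜ vv := bmap_vv _ _

theorem Ymap_ww : Ymap t₁ t₂ ww = ww ⊗ₜ vv + sgn t₁.sg • (vv ⊗ₜ ww) := bmap_ww _ _

theorem Y'map_vv : Y'map t₁ t₂ vv = (t₁.lam + t₂.lam)⁻¹ •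
    (t₁.lam • (vv ⊗ₜ ww) - (sgn t₁.sg * t₂.lam) • (ww ⊗ₜ vv)) := bmap_vv _ _

theorem Y'map_ww : Y'map t₁ t₂ ww = ww ⊗ₜ ww := bmap_ww _ _

theorem Lmap_vv_tmul_vv : Lmap t₁ t₂ (vv ⊗ₜ vv) = vv := by simp [Lmap, vv]

theorem Lmap_vv_tmul_ww :
    Lmap t₁ t₂ (vv ⊗ₜ ww) = (sgn t₁.sg * t₂.lam / (t₁.lam + t₂.lam)) • ww := by
  simp [Lmap, vv, ww]

theorem Lmap_ww_tmul_vv : Lmap t₁ t₂ (ww ⊗ₜ vv) = (t₁.lam / (t₁.lam + t₂.lam)) • ww := by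
  simp [Lmap, vv, ww]

theorem Lmap_ww_tmul_ww : Lmap t₁ t₂ (ww ⊗ₜ ww) = 0 := by simp [Lmap, ww]

theorem L'map_vv_tmul_vv : L'map t₁ t₂ (vv ⊗ₜ vv) = 0 := by simp [L'map, vv]

theorem L'map_vv_tmul_ww : L'map t₁ t₂ (vv ⊗ₜ ww) = vv := by simp [L'map, vv, ww]

theorem L'map_ww_tmul_vv : L'map t₁ t₂ (ww ⊗ₜ vv) = -sgn t₁.sg • vv := by simp [L'map, vv, ww]

theorem L'map_ww_tmul_ww : L'map t₁ t₂ (ww ⊗ₜ ww) = ww := by simp [L'map, ww]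

variable {t₁ t₂} in
theorem Ymap_comp_Lmap_add_Y'map_comp_L'map (h : t₁.lam + t₂.lam ≠ 0) :
    Ymap t₁ t₂ ∘ₗ Lmap t₁ t₂ + Y'map t₁ t₂ ∘ₗ L'map t₁ t₂ = LinearMap.id := by
  have hs := sgn_mul_self t₁.sg
  apply linearMap_ext_tmul_vv_ww <;>
    simp only [LinearMap.add_apply, LinearMap.comp_apply, LinearMap.id_apply, Lmap_vv_tmul_vv,
      Lmap_vv_tmul_ww, Lmap_ww_tmul_vv, Lmap_ww_tmul_ww, L'map_vv_tmul_vv, L'map_vv_tmul_ww,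
      L'map_ww_tmul_vv, L'map_ww_tmul_ww, map_smul, map_zero, Ymap_vv, Ymap_ww, Y'map_vv,
      Y'map_ww, add_zero, zero_add]
  · match_scalars <;> field_simp <;> grind
  · match_scalars <;> field_simp <;> grind

theorem omegaMap_tmul (x y : V) :
    omegaMap t₁ t₂ (x ⊗ₜ y) =
      (1 / 2 : ℚ) • (opH t₁ x ⊗ₜ opD t₂ y + opD t₁ x ⊗ₜ opH t₂ y) +
        (opF t₁ (opJ t₁ x) ⊗ₜ opE t₂ y - opE t₁ (opJ t₁ x) ⊗ₜ opF t₂ y) := by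
  simp [omegaMap, add_assoc, sub_eq_add_neg]

theorem omegaMap_vv_tmul_vv :
    omegaMap t₁ t₂ (vv ⊗ₜ vv) =
      ((t₁.lam * t₂.mu + t₂.lam * t₁.mu + (t₁.lam + t₂.lam)) / 2) • (vv ⊗ₜ vv) := by
  simp only [omegaMap_tmul, opH_vv, opD_apply, opE_vv, opF_vv, opJ_vv, map_smul, smul_zero,
    tmul_zero, zero_tmul, ← smul_tmul', tmul_smul]
  module

theorem omegaMap_vv_tmul_ww :
    omegaMap t₁ t₂ (vv ⊗ₜ ww) =
      ((t₁.lam * t₂.mu + t₂.lam * t₁.mu - t₁.lam + t₂.lam) / 2) • (vv ⊗ₜ ww) +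
        (sgn t₁.sg * t₂.lam) • (ww ⊗ₜ vv) := by
  simp only [omegaMap_tmul, opH_vv, opH_ww, opD_apply, opE_vv, opE_ww, opF_vv, opF_ww, opJ_vv,
    map_smul, smul_zero, tmul_zero, ← smul_tmul', tmul_smul]
  module

theorem omegaMap_ww_tmul_vv :
    omegaMap t₁ t₂ (ww ⊗ₜ vv) =
      ((t₁.lam * t₂.mu + t₂.lam * t₁.mu + t₁.lam - t₂.lam) / 2) • (ww ⊗ₜ vv) +
        (sgn t₁.sg * t₁.lam) • (vv ⊗ₜ ww) := by
  simp only [omegaMap_tmul, opH_vv, opH_ww, opD_apply, opE_vv, opE_ww, opF_vv, opF_ww, opJ_ww,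
    map_smul, smul_zero, tmul_zero, ← smul_tmul', tmul_smul]
  module

theorem omegaMap_ww_tmul_ww :
    omegaMap t₁ t₂ (ww ⊗ₜ ww) =
      ((t₁.lam * t₂.mu + t₂.lam * t₁.mu - (t₁.lam + t₂.lam)) / 2) • (ww ⊗ₜ ww) := by
  simp only [omegaMap_tmul, opH_ww, opD_apply, opE_ww, opF_ww, opJ_ww, map_smul, smul_zero,
    tmul_zero, zero_tmul, ← smul_tmul', tmul_smul]
  module

theorem omegaMap_comp_Ymap :
    omegaMap t₁ t₂ ∘ₗ Ymap t₁ t₂ =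
      ((t₁.lam * t₂.mu + t₂.lam * t₁.mu + (t₁.lam + t₂.lam)) / 2) • Ymap t₁ t₂ := by
  have hs := sgn_mul_self t₁.sg
  apply linearMap_ext_vv_ww
  · simp only [LinearMap.comp_apply, LinearMap.smul_apply, Ymap_vv, omegaMap_vv_tmul_vv]
  · simp only [LinearMap.comp_apply, LinearMap.smul_apply, Ymap_ww, map_add, map_smul,
      omegaMap_ww_tmul_vv, omegaMap_vv_tmul_ww]
    match_scalars <;> grind

theorem omegaMap_comp_Y'map :
    omegaMap t₁ t₂ ∘ₗ Y'map t₁ t₂ =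
      ((t₁.lam * t₂.mu + t₂.lam * t₁.mu - (t₁.lam + t₂.lam)) / 2) • Y'map t₁ t₂ := by
  have hs := sgn_mul_self t₁.sg
  apply linearMap_ext_vv_ww
  · simp only [LinearMap.comp_apply, LinearMap.smul_apply, Y'map_vv, map_sub, map_smul,
      omegaMap_ww_tmul_vv, omegaMap_vv_tmul_ww]
    match_scalars <;> grind
  · simp only [LinearMap.comp_apply, LinearMap.smul_apply, Y'map_ww, omegaMap_ww_tmul_ww]

end TensorProductOfTwo

/-- Ω = ((a+b)/2)·Y∘L + ((a−b)/2)·Y'∘L' with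
a = λ₁μ₂+λ₂μ₁ and b = λ₁+λ₂. -/
theorem stmt18 (t₁ t₂ : Triple) (h₁ : t₁.lam ≠ 0) (h₂ : t₂.lam ≠ 0)
    (h₁₂ : t₁.lam + t₂.lam ≠ 0) :
    omegaMap t₁ t₂ =
      ((t₁.lam * t₂.mu + t₂.lam * t₁.mu + (t₁.lam + t₂.lam)) / 2) •
        (Ymap t₁ t₂ ∘ₗ Lmap t₁ t₂)
      + ((t₁.lam * t₂.mu + t₂.lam * t₁.mu - (t₁.lam + t₂.lam)) / 2) •
        (Y'map t₁ t₂ ∘ₗ L'map t₁ t₂) :=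
  eq_smul_comp_add_smul_comp_of_comp_eq_smul (omegaMap_comp_Ymap t₁ t₂)
    (omegaMap_comp_Y'map t₁ t₂) (Ymap_comp_Lmap_add_Y'map_comp_L'map h₁₂)

end
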